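/- arXiv:0812.1318 — 2 statements merged into one kernel-verified Lean document; each statement's English description precedes it below -/
import Mathlib

section
/- Let k be a positive integer with 4 ∣ k+2, set k̄ = k+2, and write k̄ = 2^{2r+ε}·p with p odd, ε ∈ {0,1}, and r ≥ 1. Then the number of triples (v,z,n) of integers with 1 ≤ v ≤ k̄/2, 2v ∣ k̄, 2v²/k̄ an odd integer, 1 ≤ z ≤ 2v²/k̄, (2v²/k̄) ∣ (z²−1), and n ∈ {0,1}, equals 2·ε·d(p), where d(m) denotes the number of positive divisors of m. -/
/-- Auxiliary data attached to a divisor `c * a` of `p`. -/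
def M21P (p c a b z : ℕ) : Prop :=
  p = c ^ 2 * (a * b) ∧ Nat.Coprime a b ∧ 1 ≤ z ∧ z ≤ a * b ∧ a ∣ z - 1 ∧ b ∣ z + 1

lemma odd_coprime_aux {b z : ℕ} (hb : Odd b) (hz : 1 ≤ z) {q : ℕ} (h1 : q ∣ b)
    (h2 : q ∣ z - 1) (h3 : q ∣ z + 1) : q = 1 := by
  have h4 : q ∣ 2 := by
    have h := Nat.dvd_sub h3 h2
    have e : z + 1 - (z - 1) = 2 := by omega
    rwa [e] at h
  have hq : Odd q := Odd.of_dvd_nat hb h1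
  rcases (Nat.dvd_prime Nat.prime_two).1 h4 with h | h
  · exact h
  · subst h
    exact absurd hq (by decide)

lemma M21_exists (p d : ℕ) (hp : Odd p) (hd : d ∣ p) :
    ∃ c a b z, d = c * a ∧ M21P p c a b z := by
  obtain ⟨e, rfl⟩ := hd
  have hpos : 0 < d * e := hp.pos
  have hd0 : 0 < d := Nat.pos_of_mul_pos_right hpos
  obtain ⟨g, a, b, hg, hab, ha, hb⟩ := Nat.exists_coprime' (m := d) (n := e)
    (Nat.gcd_pos_of_pos_left _ hd0)
  subst ha hb
  have hapos : 0 < a := Nat.pos_of_mul_pos_right hd0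
  have hbpos : 0 < b := by
    rcases Nat.eq_zero_or_pos b with h | h
    · subst h; simp at hpos
    · exact h
  have habpos : 0 < a * b := Nat.mul_pos hapos hbpos
  obtain ⟨x, hx1, hx2⟩ := Nat.chineseRemainder hab 1 (b - 1)
  -- representative in [1, ab]
  have key : ∃ z, 1 ≤ z ∧ z ≤ a * b ∧ z ≡ x [MOD a * b] := by
    rcases Nat.eq_zero_or_pos (x % (a * b)) with h | h
    · refine ⟨a * b, habpos, le_rfl, ?_⟩
      simp [Nat.ModEq, h]
    · exact ⟨x % (a * b), h, (Nat.mod_lt _ habpos).le, Nat.mod_modEq _ _⟩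
  obtain ⟨z, hz1, hz2, hz3⟩ := key
  refine ⟨g, a, b, z, by ring, by ring, hab, hz1, hz2, ?_, ?_⟩
  · have h : z ≡ 1 [MOD a] := (hz3.of_mul_right b).trans hx1
    exact (Nat.modEq_iff_dvd' hz1).1 h.symm
  · have h : z ≡ b - 1 [MOD b] := (hz3.of_mul_left a).trans hx2
    have h' := h.add_right 1
    rw [Nat.sub_add_cancel hbpos] at h'
    exact (Nat.modEq_zero_iff_dvd).1 (h'.trans (by simp [Nat.ModEq]))

lemma M21_gcd {p c a b z : ℕ} (hp : Odd p) (h : M21P p c a b z) :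
    Nat.gcd (z - 1) (a * b) = a := by
  obtain ⟨h1, h2, h3, h4, h5, h6⟩ := h
  have hb : Odd b := Odd.of_dvd_nat hp ⟨c ^ 2 * a, by rw [h1]; ring⟩
  have hc : Nat.Coprime (z - 1) b :=
    odd_coprime_aux hb h3 (Nat.gcd_dvd_right _ _) (Nat.gcd_dvd_left _ _)
      ((Nat.gcd_dvd_right _ _).trans h6)
  rw [hc.symm.gcd_mul_right_cancel_right]
  exact Nat.gcd_eq_right h5

lemma M21_unique {p c a b z c' a' b' z' : ℕ} (hp : Odd p) (h : M21P p c a b z)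
    (h' : M21P p c' a' b' z') (hd : c * a = c' * a') :
    c = c' ∧ a = a' ∧ b = b' ∧ z = z' := by
  obtain ⟨h1, h2, h3, h4, h5, h6⟩ := h
  obtain ⟨k1, k2, k3, k4, k5, k6⟩ := h'
  have hpos := hp.pos
  have hca : 0 < c * a := Nat.pos_of_ne_zero (by
    intro h0
    have : p = (c * a) * (c * b) := by rw [h1]; ring
    rw [h0] at this; omega)
  have hcb : c * b = c' * b' := by
    apply Nat.eq_of_mul_eq_mul_left hca
    calc (c * a) * (c * b) = p := by rw [h1]; ring
      _ = (c' * a') * (c' * b') := by rw [k1]; ring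
      _ = _ := by rw [hd]
  have hc : c = c' := by
    have e1 : Nat.gcd (c * a) (c * b) = c := by rw [Nat.gcd_mul_left, h2.gcd_eq_one, mul_one]
    have e2 : Nat.gcd (c' * a') (c' * b') = c' := by
      rw [Nat.gcd_mul_left, k2.gcd_eq_one, mul_one]
    rw [← e1, ← e2, hd, hcb]
  subst hc
  have hc0 : 0 < c := Nat.pos_of_mul_pos_right hca
  have ha : a = a' := Nat.eq_of_mul_eq_mul_left hc0 hd
  have hb : b = b' := Nat.eq_of_mul_eq_mul_left hc0 hcb
  subst ha hb
  refine ⟨rfl, rfl, rfl, ?_⟩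
  have q1 : z ≡ z' [MOD a] :=
    ((Nat.modEq_iff_dvd' h3).2 h5).symm.trans ((Nat.modEq_iff_dvd' k3).2 k5)
  have q2 : z ≡ z' [MOD b] :=
    Nat.ModEq.add_right_cancel' 1
      (((Nat.modEq_zero_iff_dvd).2 h6).trans ((Nat.modEq_zero_iff_dvd).2 k6).symm)
  have q3 : z ≡ z' [MOD a * b] := (Nat.modEq_and_modEq_iff_modEq_mul h2).1 ⟨q1, q2⟩
  rcases le_total z z' with hl | hl
  · have := (Nat.modEq_iff_dvd' hl).1 q3
    have := Nat.eq_zero_of_dvd_of_lt this (by omega)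
    omega
  · have := (Nat.modEq_iff_dvd' hl).1 q3.symm
    have := Nat.eq_zero_of_dvd_of_lt this (by omega)
    omega

lemma M21_of {p c m z : ℕ} (hp : Odd p) (h : p = c ^ 2 * m) (hz1 : 1 ≤ z) (hz2 : z ≤ m)
    (hm : m ∣ z ^ 2 - 1) : ∃ a b, m = a * b ∧ M21P p c a b z := by
  have hmo : Odd m := Odd.of_dvd_nat hp ⟨c ^ 2, by rw [h]; ring⟩
  have hg : 0 < Nat.gcd (z - 1) m := Nat.gcd_pos_of_pos_right _ hmo.pos
  obtain ⟨u, b, hub, hu, hb⟩ := Nat.exists_coprime (z - 1) m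
  have hbz : b ∣ z + 1 := by
    have e : z ^ 2 - 1 = (z - 1) * (z + 1) := by
      have := Nat.sq_sub_sq z 1
      rw [one_pow] at this
      rw [this]; ring
    have : Nat.gcd (z - 1) m * b ∣ Nat.gcd (z - 1) m * (u * (z + 1)) := by
      have e1 : Nat.gcd (z - 1) m * b = m := by rw [mul_comm]; exact hb.symm
      have e2 : Nat.gcd (z - 1) m * (u * (z + 1)) = z ^ 2 - 1 := by
        rw [e, ← mul_assoc, mul_comm _ u, ← hu]
      rw [e1, e2]; exact hm
    exact hub.symm.dvd_of_dvd_mul_left (Nat.dvd_of_mul_dvd_mul_left hg this)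
  have hab : m = Nat.gcd (z - 1) m * b := by rw [mul_comm]; exact hb
  have hbm : b ∣ m := ⟨_, hb⟩
  refine ⟨Nat.gcd (z - 1) m, b, hab, ?_, ?_, hz1, ?_, Nat.gcd_dvd_left _ _, hbz⟩
  · rw [← hab]; exact h
  · exact odd_coprime_aux (Odd.of_dvd_nat hmo hbm) hz1 (Nat.gcd_dvd_right _ _)
      ((Nat.gcd_dvd_left _ _).trans (Nat.gcd_dvd_left _ _)) ((Nat.gcd_dvd_right _ _).trans hbz)
  · rw [← hab]; exact hz2

lemma two_pow_mul_odd_inj {s t x y : ℕ} (hx : Odd x) (hy : Odd y)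
    (h : 2 ^ s * x = 2 ^ t * y) : s = t ∧ x = y := by
  have aux : ∀ {s t x y : ℕ}, Odd x → 2 ^ s * x = 2 ^ t * y → t ≤ s := by
    intro s t x y hx h
    have h2 : 2 ^ t ∣ 2 ^ s * x := ⟨y, h⟩
    have h3 : Nat.Coprime (2 ^ t) x := (Nat.coprime_two_left.2 hx).pow_left t
    exact (Nat.pow_dvd_pow_iff_le_right (by norm_num)).1 (h3.dvd_of_dvd_mul_right h2)
  have e : s = t := le_antisymm (aux hy h.symm) (aux hx h)
  subst e
  exact ⟨rfl, Nat.eq_of_mul_eq_mul_left (by positivity) h⟩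

lemma M21_v {K p r ε v : ℕ} (hK : 0 < K) (hp : Odd p) (hε : ε ≤ 1)
    (hdec : K = 2 ^ (2 * r + ε) * p) (h1 : 2 * v ∣ K) (h2 : K ∣ 2 * v ^ 2)
    (h3 : Odd (2 * v ^ 2 / K)) :
    ε = 1 ∧ ∃ c, p = c ^ 2 * (2 * v ^ 2 / K) ∧ v = 2 ^ r * c * (2 * v ^ 2 / K) := by
  obtain ⟨c', hc'⟩ := h1
  obtain ⟨m, hm⟩ := h2
  have e : 2 * v ^ 2 / K = m := by rw [hm, Nat.mul_div_cancel_left _ hK]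
  rw [e] at h3 ⊢
  have hv : 0 < 2 * v := Nat.pos_of_ne_zero (by rintro h0; rw [h0] at hc'; omega)
  have hvc : v = c' * m := by
    apply Nat.eq_of_mul_eq_mul_left hv
    calc 2 * v * v = 2 * v ^ 2 := by ring
      _ = 2 * v * (c' * m) := by rw [hm, hc']; ring
  have hc0 : c' ≠ 0 := by rintro rfl; omega
  obtain ⟨s, c, hco, hcs⟩ := Nat.exists_eq_two_pow_mul_odd hc0
  have hh : 2 ^ (2 * r + ε) * p = 2 ^ (2 * s + 1) * (c ^ 2 * m) := by
    rw [← hdec, hc', hvc, hcs]; ring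
  obtain ⟨q1, q2⟩ := two_pow_mul_odd_inj hp (hco.pow.mul h3) hh
  have hrs : r = s := by omega
  subst hrs
  exact ⟨by omega, c, q2, by rw [← hcs]; exact hvc⟩


/-- for `4 ∣ k+2` with `k̄ = 2^{2r+ε}·p` (`p` odd, `ε ∈ {0,1}`, `r ≥ 1`),
the number of triples `(v,z,n)` parametrising the physical invariants `M^{2,1}[v,z,n]`
equals `2·ε·d(p)`. -/
theorem count_M21 (k p r ε : ℕ) (hk : 4 ∣ k + 2) (hk0 : 0 < k)
    (hp : Odd p) (hr : 1 ≤ r) (hε : ε ≤ 1) (hdec : k + 2 = 2 ^ (2 * r + ε) * p) :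
    Nat.card {t : ℕ × ℕ × ℕ //
        1 ≤ t.1 ∧ t.1 ≤ (k + 2) / 2 ∧ 2 * t.1 ∣ (k + 2) ∧
        (k + 2) ∣ 2 * t.1 ^ 2 ∧ Odd (2 * t.1 ^ 2 / (k + 2)) ∧
        1 ≤ t.2.1 ∧ t.2.1 ≤ 2 * t.1 ^ 2 / (k + 2) ∧
        (2 * t.1 ^ 2 / (k + 2)) ∣ (t.2.1 ^ 2 - 1) ∧
        t.2.2 ≤ 1}
      = 2 * ε * p.divisors.card := by
  have hK : 0 < k + 2 := by omega
  rcases Nat.le_one_iff_eq_zero_or_eq_one.1 hε with h0 | h0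
  · have hem : IsEmpty {t : ℕ × ℕ × ℕ //
        1 ≤ t.1 ∧ t.1 ≤ (k + 2) / 2 ∧ 2 * t.1 ∣ (k + 2) ∧
        (k + 2) ∣ 2 * t.1 ^ 2 ∧ Odd (2 * t.1 ^ 2 / (k + 2)) ∧
        1 ≤ t.2.1 ∧ t.2.1 ≤ 2 * t.1 ^ 2 / (k + 2) ∧
        (2 * t.1 ^ 2 / (k + 2)) ∣ (t.2.1 ^ 2 - 1) ∧
        t.2.2 ≤ 1} := by
      refine ⟨?_⟩
      rintro ⟨t, -, -, h1, h2, h3, -⟩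
      have := (M21_v hK hp hε hdec h1 h2 h3).1
      omega
    rw [Nat.card_of_isEmpty, h0]
    simp
  subst h0
  have hex : ∀ d : {x // x ∈ p.divisors}, ∃ c a b z, d.1 = c * a ∧ M21P p c a b z :=
    fun d => M21_exists p d.1 hp (Nat.dvd_of_mem_divisors d.2)
  choose c a b z hd hP using hex
  have hquot : ∀ d, 2 * (2 ^ r * c d * (a d * b d)) ^ 2 = (k + 2) * (a d * b d) := by
    intro d
    have h := (hP d).1
    rw [hdec]
    calc _ = 2 ^ (2 * r + 1) * (c d ^ 2 * (a d * b d)) * (a d * b d) := by ring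
      _ = _ := by rw [← h]
  have hquot' : ∀ d, 2 * (2 ^ r * c d * (a d * b d)) ^ 2 / (k + 2) = a d * b d := by
    intro d
    rw [hquot, Nat.mul_div_cancel_left _ hK]
  have h2v : ∀ d, 2 * (2 ^ r * c d * (a d * b d)) ∣ k + 2 := by
    intro d
    have h := (hP d).1
    refine ⟨2 ^ r * c d, ?_⟩
    calc k + 2 = 2 ^ (2 * r + 1) * (c d ^ 2 * (a d * b d)) := by rw [← h]; exact hdec
      _ = _ := by ring
  let F : {x // x ∈ p.divisors} × Fin 2 → {t : ℕ × ℕ × ℕ //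
        1 ≤ t.1 ∧ t.1 ≤ (k + 2) / 2 ∧ 2 * t.1 ∣ (k + 2) ∧
        (k + 2) ∣ 2 * t.1 ^ 2 ∧ Odd (2 * t.1 ^ 2 / (k + 2)) ∧
        1 ≤ t.2.1 ∧ t.2.1 ≤ 2 * t.1 ^ 2 / (k + 2) ∧
        (2 * t.1 ^ 2 / (k + 2)) ∣ (t.2.1 ^ 2 - 1) ∧
        t.2.2 ≤ 1} := fun x =>
    ⟨(2 ^ r * c x.1 * (a x.1 * b x.1), z x.1, x.2.1), by
      obtain ⟨d, n⟩ := x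
      obtain ⟨h1, h2, h3, h4, h5, h6⟩ := hP d
      have hdv := h2v d
      have hle := Nat.le_of_dvd hK hdv
      dsimp only
      rw [hquot' d]
      refine ⟨?_, by omega, hdv, ⟨_, hquot d⟩, ?_, h3, h4, ?_, by omega⟩
      · have := Nat.pos_of_dvd_of_pos hdv hK
        omega
      · exact Odd.of_dvd_nat hp ⟨c d ^ 2, by rw [mul_comm]; exact h1⟩
      · have e : z d ^ 2 - 1 = (z d - 1) * (z d + 1) := by
          have := Nat.sq_sub_sq (z d) 1
          rw [one_pow] at this
          rw [this]; ring
        rw [e]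
        exact mul_dvd_mul h5 h6⟩
  have hF : Function.Bijective F := by
    constructor
    · rintro ⟨d, n⟩ ⟨d', n'⟩ h
      have h' := congrArg Subtype.val h
      simp only [F, Prod.mk.injEq] at h'
      obtain ⟨e1, e2, e3⟩ := h'
      have em : a d * b d = a d' * b d' := by
        rw [← hquot' d, ← hquot' d', e1]
      have ea : a d = a d' := by
        rw [← M21_gcd hp (hP d), ← M21_gcd hp (hP d'), e2, em]
      have hpos : 0 < a d' * b d' := lt_of_lt_of_le (hP d').2.2.1 (hP d').2.2.2.1
      have ec : c d = c d' := by
        rw [em] at e1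
        exact Nat.eq_of_mul_eq_mul_left (by positivity) (Nat.eq_of_mul_eq_mul_right hpos e1)
      have ed : d = d' := Subtype.ext (by rw [hd d, hd d', ea, ec])
      exact Prod.ext ed (Fin.ext e3)
    · rintro ⟨⟨v, w, n⟩, ht⟩
      have ht' := ht
      dsimp only at ht'
      obtain ⟨-, -, h1, h2, h3, h4, h5, h6, h7⟩ := ht'
      obtain ⟨-, c', hc1, hc2⟩ := M21_v hK hp hε hdec h1 h2 h3
      obtain ⟨a', b', hm, hP'⟩ := M21_of hp hc1 h4 h5 h6
      have hmem : c' * a' ∈ p.divisors := Nat.mem_divisors.2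
        ⟨⟨c' * b', by rw [hP'.1]; ring⟩, hp.pos.ne'⟩
      obtain ⟨u1, u2, u3, u4⟩ := M21_unique hp (hP ⟨_, hmem⟩) hP' (hd ⟨_, hmem⟩).symm
      refine ⟨(⟨_, hmem⟩, ⟨n, by omega⟩), ?_⟩
      apply Subtype.ext
      simp only [F, Prod.mk.injEq]
      refine ⟨?_, u4, trivial⟩
      rw [u1, u2, u3, ← hm]
      exact hc2.symm
  rw [← Nat.card_eq_of_bijective F hF, Nat.card_prod, Nat.card_eq_fintype_card, Nat.card_eq_fintype_card,
    Fintype.card_coe, Fintype.card_fin]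
  ring
end

section
/- Let k be a positive integer with 4 ∣ k+2, set k̄ = k+2, and write k̄ = 2^{2r+ε}·p with p odd, ε ∈ {0,1}, and r ≥ 1. Then the number of quadruples (v,z,n,m) of integers with 1 ≤ v ≤ k̄, k̄ ∣ v², k̄/v an odd integer, 1 ≤ z ≤ 2v²/k̄, (4v²/k̄) ∣ (z²−1), and n, m ∈ {0,1}, equals 8·d(p), where d(m) denotes the number of positive divisors of m. -/
/-- Unitary divisors of `N`. -/
def unitaryDivs (N : ℕ) : Finset ℕ := N.divisors.filter fun A => Nat.Coprime A (N / A)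

/-- Solutions of `z² ≡ 1 mod 4N` in `1..2N`. -/
def sols (N : ℕ) : Finset ℕ := (Finset.Icc 1 (2 * N)).filter fun z => 4 * N ∣ z ^ 2 - 1

lemma mem_sols {N z : ℕ} (hN : 0 < N) :
    z ∈ sols N ↔ ∃ w, z = 2 * w + 1 ∧ w < N ∧ N ∣ w * (w + 1) := by
  simp only [sols, Finset.mem_filter, Finset.mem_Icc]
  constructor
  · rintro ⟨⟨h1, h2⟩, h3⟩
    rcases Nat.even_or_odd' z with ⟨w, rfl | rfl⟩
    · exfalso
      have h4 : 4 ∣ (2 * w) ^ 2 - 1 := (Dvd.intro _ rfl).trans h3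
      have h5 : (2 * w) ^ 2 = 4 * (w * w) := by ring
      have h6 : 0 < w * w := Nat.mul_pos (by omega) (by omega)
      omega
    · refine ⟨w, rfl, by omega, ?_⟩
      have h5 : (2 * w + 1) ^ 2 - 1 = 4 * (w * (w + 1)) := by
        have : (2 * w + 1) ^ 2 = 4 * (w * (w + 1)) + 1 := by ring
        omega
      rw [h5] at h3
      exact Nat.dvd_of_mul_dvd_mul_left (by norm_num) h3
  · rintro ⟨w, rfl, hw, h⟩
    refine ⟨⟨by omega, by omega⟩, ?_⟩
    have h5 : (2 * w + 1) ^ 2 - 1 = 4 * (w * (w + 1)) := by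
      have : (2 * w + 1) ^ 2 = 4 * (w * (w + 1)) + 1 := by ring
      omega
    rw [h5]
    exact Nat.mul_dvd_mul_left _ h

lemma split_gcd {N w : ℕ} (hN : 0 < N) (h : N ∣ w * (w + 1)) :
    N / Nat.gcd w N ∣ w + 1 := by
  have hg : 0 < Nat.gcd w N := Nat.gcd_pos_of_pos_right _ hN
  have h1 : N / Nat.gcd w N ∣ (w / Nat.gcd w N) * (w + 1) := by
    apply Nat.dvd_of_mul_dvd_mul_left hg
    rw [Nat.mul_div_cancel' (Nat.gcd_dvd_right w N), ← mul_assoc,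
      Nat.mul_div_cancel' (Nat.gcd_dvd_left w N)]
    exact h
  exact (Nat.coprime_div_gcd_div_gcd hg).symm.dvd_of_dvd_mul_left h1

lemma card_sols {N : ℕ} (hN : 0 < N) : (sols N).card = (unitaryDivs N).card := by
  have hcop : ∀ w, Nat.Coprime w (w + 1) := fun w => by simp
  apply Finset.card_bij (fun z _ => Nat.gcd ((z - 1) / 2) N)
  · intro z hz
    obtain ⟨w, rfl, hw, h⟩ := (mem_sols hN).1 hz
    have e : (2 * w + 1 - 1) / 2 = w := by omega
    simp only [e, unitaryDivs, Finset.mem_filter, Nat.mem_divisors]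
    exact ⟨⟨Nat.gcd_dvd_right _ _, hN.ne'⟩,
      Nat.Coprime.of_dvd (Nat.gcd_dvd_left _ _) (split_gcd hN h) (hcop w)⟩
  · intro z hz z' hz' hg
    obtain ⟨w, rfl, hw, h⟩ := (mem_sols hN).1 hz
    obtain ⟨w', rfl, hw', h'⟩ := (mem_sols hN).1 hz'
    have e : (2 * w + 1 - 1) / 2 = w := by omega
    have e' : (2 * w' + 1 - 1) / 2 = w' := by omega
    simp only [e, e'] at hg
    have hB := split_gcd hN h
    have hB' := split_gcd hN h'
    have hA : Nat.gcd w N ∣ w := Nat.gcd_dvd_left _ _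
    have hA' : Nat.gcd w' N ∣ w' := Nat.gcd_dvd_left _ _
    rw [← hg] at hB' hA'
    have hc : Nat.Coprime (Nat.gcd w N) (N / Nat.gcd w N) :=
      Nat.Coprime.of_dvd hA hB (hcop w)
    have m1 : w ≡ w' [MOD Nat.gcd w N] :=
      ((Nat.modEq_zero_iff_dvd.2 hA)).trans (Nat.modEq_zero_iff_dvd.2 hA').symm
    have m2 : w + 1 ≡ w' + 1 [MOD N / Nat.gcd w N] :=
      ((Nat.modEq_zero_iff_dvd.2 hB)).trans (Nat.modEq_zero_iff_dvd.2 hB').symm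
    have m3 := (Nat.modEq_and_modEq_iff_modEq_mul hc).1 ⟨m1, Nat.ModEq.add_right_cancel' 1 m2⟩
    rw [Nat.mul_div_cancel' (Nat.gcd_dvd_right w N)] at m3
    rw [Nat.ModEq.eq_of_lt_of_lt m3 hw hw']
  · intro A hA
    simp only [unitaryDivs, Finset.mem_filter, Nat.mem_divisors] at hA
    obtain ⟨⟨⟨B, rfl⟩, -⟩, hc⟩ := hA
    have hA0 : 0 < A := Nat.pos_of_mul_pos_right hN
    have hB0 : 0 < B := Nat.pos_of_mul_pos_left hN
    rw [Nat.mul_div_cancel_left _ hA0] at hc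
    let x := Nat.chineseRemainder hc 0 (B - 1)
    have hx1 : A ∣ (x : ℕ) := Nat.modEq_zero_iff_dvd.1 x.2.1
    have hx2 : B ∣ (x : ℕ) + 1 := by
      have := Nat.ModEq.add_right 1 x.2.2
      rw [Nat.sub_add_cancel hB0] at this
      exact Nat.modEq_zero_iff_dvd.1 (this.trans (Nat.modEq_zero_iff_dvd.2 dvd_rfl))
    have hx3 : (x : ℕ) < A * B := Nat.chineseRemainder_lt_mul hc _ _ hA0.ne' hB0.ne'
    refine ⟨2 * x + 1, (mem_sols hN).2 ⟨x, rfl, hx3, Nat.mul_dvd_mul hx1 hx2⟩, ?_⟩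
    have e : (2 * (x : ℕ) + 1 - 1) / 2 = x := by omega
    rw [e]
    have hcx : Nat.Coprime (x : ℕ) B := Nat.Coprime.of_dvd dvd_rfl hx2 (hcop x)
    rw [Nat.Coprime.gcd_mul_right_cancel_right _ hcx.symm]
    exact Nat.gcd_eq_right hx1

/-- Odd `c` with `c² ∣ K`. -/
def oddSq (K : ℕ) : Finset ℕ := K.divisors.filter fun c => Odd c ∧ c ^ 2 ∣ K

/-- Divisors `d` of `K` with `gcd (d, K/d)` odd. -/
def oddGcd (K : ℕ) : Finset ℕ := K.divisors.filter fun d => Odd (Nat.gcd d (K / d))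

lemma card_oddGcd_eq_sum {K : ℕ} (hK : 0 < K) :
    (oddGcd K).card = ∑ c ∈ oddSq K, (unitaryDivs (K / c ^ 2)).card := by
  rw [Finset.card_eq_sum_card_fiberwise (f := fun d => Nat.gcd d (K / d)) (t := oddSq K)]
  · apply Finset.sum_congr rfl
    intro c hc
    simp only [oddSq, Finset.mem_filter, Nat.mem_divisors] at hc
    obtain ⟨⟨-, -⟩, hodd, ⟨q, rfl⟩⟩ := hc
    have hc0 : 0 < c := hodd.pos
    have hq0 : 0 < q := Nat.pos_of_mul_pos_left hK
    rw [Nat.mul_div_cancel_left _ (by positivity)]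
    symm
    apply Finset.card_bij (fun A _ => c * A)
    · intro A hA
      simp only [unitaryDivs, Finset.mem_filter, Nat.mem_divisors] at hA
      obtain ⟨⟨⟨B, rfl⟩, -⟩, hcop⟩ := hA
      have hA0 : 0 < A := Nat.pos_of_mul_pos_right hq0
      rw [Nat.mul_div_cancel_left _ hA0] at hcop
      have e : c ^ 2 * (A * B) = (c * A) * (c * B) := by ring
      have e2 : Nat.gcd (c * A) (c * B) = c := by
        rw [Nat.gcd_mul_left, hcop.gcd_eq_one, mul_one]
      simp only [oddGcd, Finset.mem_filter, Nat.mem_divisors]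
      rw [e, Nat.mul_div_cancel_left _ (by positivity), e2]
      exact ⟨⟨⟨Dvd.intro _ rfl, by rw [← e]; exact hK.ne'⟩, hodd⟩, rfl⟩
    · intro A _ B _ h
      exact Nat.eq_of_mul_eq_mul_left hc0 h
    · intro d hd
      simp only [oddGcd, Finset.mem_filter, Nat.mem_divisors] at hd
      obtain ⟨⟨⟨⟨e, he⟩, -⟩, -⟩, hg⟩ := hd
      have hd0 : 0 < d := by
        rcases Nat.eq_zero_or_pos d with h | h
        · rw [he, h] at hK; simp at hK
        · exact h
      rw [he, Nat.mul_div_cancel_left _ hd0] at hg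
      obtain ⟨A, hA⟩ : c ∣ d := hg ▸ Nat.gcd_dvd_left _ _
      obtain ⟨B, hB⟩ : c ∣ e := hg ▸ Nat.gcd_dvd_right _ _
      subst hA hB
      rw [Nat.gcd_mul_left] at hg
      have hcop : Nat.gcd A B = 1 := Nat.eq_of_mul_eq_mul_left hc0 (by rw [hg, mul_one])
      have hq : q = A * B := by
        apply Nat.eq_of_mul_eq_mul_left (show 0 < c ^ 2 by positivity)
        rw [he]; ring
      refine ⟨A, ?_, rfl⟩
      simp only [unitaryDivs, Finset.mem_filter, Nat.mem_divisors]
      subst hq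
      rw [Nat.mul_div_cancel_left _ (Nat.pos_of_mul_pos_left hd0)]
      exact ⟨⟨Dvd.intro _ rfl, hq0.ne'⟩, hcop⟩
  · intro d hd
    simp only [oddGcd, Finset.coe_filter, Set.mem_setOf_eq, Nat.mem_divisors] at hd
    obtain ⟨⟨hd1, -⟩, ho⟩ := hd
    simp only [oddSq, Finset.coe_filter, Set.mem_setOf_eq, Nat.mem_divisors]
    refine ⟨⟨(Nat.gcd_dvd_left _ _).trans hd1, hK.ne'⟩, ho, ?_⟩
    calc _ ∣ d * (K / d) := by
            rw [sq]; exact Nat.mul_dvd_mul (Nat.gcd_dvd_left _ _) (Nat.gcd_dvd_right _ _)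
      _ = K := Nat.mul_div_cancel' hd1

lemma card_oddGcd {a p : ℕ} (ha : 0 < a) (hp : Odd p) :
    (oddGcd (2 ^ a * p)).card = 2 * p.divisors.card := by
  have hp0 : 0 < p := hp.pos
  have heq : oddGcd (2 ^ a * p) = p.divisors ∪ p.divisors.image (2 ^ a * ·) := by
    ext d
    simp only [oddGcd, Finset.mem_filter, Nat.mem_divisors, Finset.mem_union, Finset.mem_image]
    constructor
    · rintro ⟨⟨⟨e, he⟩, -⟩, ho⟩
      have hd0 : 0 < d := by
        rcases Nat.eq_zero_or_pos d with h | h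
        · have : 0 < 2 ^ a * p := by positivity
          rw [he, h] at this; simp at this
        · exact h
      rw [he, Nat.mul_div_cancel_left _ hd0] at ho
      rcases Nat.even_or_odd d with hd | hd
      · right
        have hee : Odd e := by
          by_contra hne
          have he2 := Nat.not_odd_iff_even.1 hne
          exact (Nat.not_even_iff_odd.2 ho) (even_iff_two_dvd.2
            (Nat.dvd_gcd hd.two_dvd he2.two_dvd))
        have h2 : 2 ^ a ∣ d :=
          (Nat.Coprime.pow_left a hee.coprime_two_left).dvd_of_dvd_mul_right (he ▸ Dvd.intro _ rfl)
        obtain ⟨f, rfl⟩ := h2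
        refine ⟨f, ⟨⟨e, ?_⟩, hp0.ne'⟩, rfl⟩
        apply Nat.eq_of_mul_eq_mul_left (show 0 < 2 ^ a by positivity)
        rw [he]; ring
      · left
        exact ⟨(Nat.Coprime.pow_right a hd.coprime_two_right).dvd_of_dvd_mul_left
          (he ▸ Dvd.intro _ rfl), hp0.ne'⟩
    · rintro (⟨hd, -⟩ | ⟨f, ⟨hf, -⟩, rfl⟩)
      · exact ⟨⟨hd.mul_left _, by positivity⟩,
          Odd.of_dvd_nat (Odd.of_dvd_nat hp hd) (Nat.gcd_dvd_left _ _)⟩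
      · refine ⟨⟨Nat.mul_dvd_mul_left _ hf, by positivity⟩, ?_⟩
        rw [Nat.mul_div_mul_left _ _ (by positivity)]
        exact Odd.of_dvd_nat (Odd.of_dvd_nat hp (Nat.div_dvd_of_dvd hf)) (Nat.gcd_dvd_right _ _)
  rw [heq, Finset.card_union_of_disjoint, Finset.card_image_of_injective]
  · ring
  · intro x y h
    exact Nat.eq_of_mul_eq_mul_left (show 0 < 2 ^ a by positivity) h
  · rw [Finset.disjoint_left]
    intro d hd hd'
    simp only [Nat.mem_divisors, Finset.mem_image] at hd hd'
    obtain ⟨f, -, rfl⟩ := hd'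
    have h1 := Odd.of_dvd_nat hp hd.1
    have h2 : 2 ∣ 2 ^ a * f := (dvd_pow_self 2 ha.ne').mul_right f
    exact (Nat.not_even_iff_odd.2 h1) (even_iff_two_dvd.2 h2)

lemma mem_quad {K : ℕ} (hK : 0 < K) (t : ℕ × ℕ × ℕ × ℕ) :
    t ∈ ((oddSq K).biUnion fun c =>
      ({K / c} : Finset ℕ) ×ˢ sols (K / c ^ 2) ×ˢ Finset.range 2 ×ˢ Finset.range 2) ↔
      (1 ≤ t.1 ∧ t.1 ≤ K ∧ K ∣ t.1 ^ 2 ∧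
        t.1 ∣ K ∧ Odd (K / t.1) ∧
        1 ≤ t.2.1 ∧ t.2.1 ≤ 2 * t.1 ^ 2 / K ∧
        (4 * t.1 ^ 2 / K) ∣ (t.2.1 ^ 2 - 1) ∧
        t.2.2.1 ≤ 1 ∧ t.2.2.2 ≤ 1) := by
  obtain ⟨v, z, n, m⟩ := t
  simp only [Finset.mem_biUnion, Finset.mem_product, Finset.mem_singleton, Finset.mem_range,
    sols, Finset.mem_filter, Finset.mem_Icc, oddSq, Nat.mem_divisors]
  have key : ∀ c q : ℕ, 0 < c → 0 < q → ∀ s, s * (c * q) ^ 2 / (c ^ 2 * q) = s * q := by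
    intro c q hc hq s
    rw [show s * (c * q) ^ 2 = (c ^ 2 * q) * (s * q) by ring]
    exact Nat.mul_div_cancel_left _ (by positivity)
  constructor
  · rintro ⟨c, ⟨-, ho, ⟨q, rfl⟩⟩, hv, ⟨⟨h1, h2⟩, h3⟩, hn, hm⟩
    have hc0 : 0 < c := ho.pos
    have hq0 : 0 < q := Nat.pos_of_mul_pos_left hK
    have e : c ^ 2 * q = c * (c * q) := by ring
    have hv' : v = c * q := by rw [hv, e, Nat.mul_div_cancel_left _ hc0]
    clear hv
    subst hv'
    rw [Nat.mul_div_cancel_left _ (by positivity)] at h2 h3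
    rw [key c q hc0 hq0, key c q hc0 hq0]
    refine ⟨Nat.mul_pos hc0 hq0, ?_, ⟨q, by ring⟩, ⟨c, by ring⟩, ?_, h1, h2, h3,
      by omega, by omega⟩
    · rw [e]; exact Nat.le_mul_of_pos_left _ hc0
    · rw [e, Nat.mul_div_cancel _ (by positivity)]; exact ho
  · rintro ⟨h1, -, h3, ⟨c, rfl⟩, h5, h6, h7, h8, h9, h10⟩
    rw [Nat.mul_div_cancel_left _ h1] at h5
    have hc0 : 0 < c := h5.pos
    obtain ⟨q, rfl⟩ : c ∣ v := by
      rw [sq] at h3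
      exact Nat.dvd_of_mul_dvd_mul_left h1 h3
    have hq0 : 0 < q := Nat.pos_of_mul_pos_left h1
    have e : c * q * c = c ^ 2 * q := by ring
    rw [e] at h7 h8 ⊢
    rw [key c q hc0 hq0] at h7 h8
    refine ⟨c, ⟨⟨⟨c * q, by ring⟩, by positivity⟩, h5, Dvd.intro _ rfl⟩, ?_, ?_,
      by omega, by omega⟩
    · rw [← e, Nat.mul_div_cancel _ hc0]
    · rw [Nat.mul_div_cancel_left _ (by positivity)]
      exact ⟨⟨h6, h7⟩, h8⟩


/-- for `4 ∣ k+2` with `k̄ = 2^{2r+ε}·p` (`p` odd, `ε ∈ {0,1}`, `r ≥ 1`),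
the number of quadruples `(v,z,n,m)` parametrising the physical invariants
`M^{2,2}[v,z,n,m]` equals `8·d(p)`. -/
theorem count_M22 (k p r ε : ℕ) (hk : 4 ∣ k + 2) (hk0 : 0 < k)
    (hp : Odd p) (hr : 1 ≤ r) (hε : ε ≤ 1) (hdec : k + 2 = 2 ^ (2 * r + ε) * p) :
    Nat.card {t : ℕ × ℕ × ℕ × ℕ //
        1 ≤ t.1 ∧ t.1 ≤ k + 2 ∧ (k + 2) ∣ t.1 ^ 2 ∧
        t.1 ∣ (k + 2) ∧ Odd ((k + 2) / t.1) ∧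
        1 ≤ t.2.1 ∧ t.2.1 ≤ 2 * t.1 ^ 2 / (k + 2) ∧
        (4 * t.1 ^ 2 / (k + 2)) ∣ (t.2.1 ^ 2 - 1) ∧
        t.2.2.1 ≤ 1 ∧ t.2.2.2 ≤ 1}
      = 8 * p.divisors.card := by
  have hK : 0 < k + 2 := by omega
  rw [Nat.subtype_card _ (mem_quad hK), Finset.card_biUnion]
  · have h2 : 2 * p.divisors.card = (oddGcd (k + 2)).card := by
      rw [hdec, card_oddGcd (by omega) hp]
    rw [show 8 * p.divisors.card = 2 * p.divisors.card * 4 by ring, h2,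
      card_oddGcd_eq_sum hK, Finset.sum_mul]
    apply Finset.sum_congr rfl
    intro c hc
    simp only [oddSq, Finset.mem_filter, Nat.mem_divisors] at hc
    have hN : 0 < (k + 2) / c ^ 2 := Nat.div_pos (Nat.le_of_dvd hK hc.2.2) (pow_pos hc.2.1.pos 2)
    simp [Finset.card_product, card_sols hN]
  · intro c hc c' hc' hne
    simp only [oddSq, Finset.mem_coe, Finset.mem_filter, Nat.mem_divisors] at hc hc'
    simp only [Function.onFun]
    rw [Finset.disjoint_left]
    intro t ht ht'
    rw [Finset.mem_product, Finset.mem_singleton] at ht ht'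
    apply hne
    have h := ht.1.symm.trans ht'.1
    rw [← Nat.div_div_self hc.1.1 hK.ne', ← Nat.div_div_self hc'.1.1 hK.ne', h]
end
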